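/- There exists a real number σ₁ such that the entire function f₁(s) has no zero in the left half-plane Re(s) < σ₁; that is, for all complex s with Re(s) < σ₁ one has f₁(s) ≠ 0. -/

import Mathlib

open Complex

noncomputable def chi (s : ℂ) : ℂ := s * (s - 1) * completedRiemannZeta₀ s + 1

noncomputable def A : ℂ := Real.pi / 3 - 1

noncomputable def f1 (s : ℂ) : ℂ :=
  (s - 1) * ((s - 1) * (3 * s - 2) * (A * s - A + 1) * chi (s + 1) * chi (3 * s)
    - (s + 1) * (s - 2) * chi s * chi (3 * s - 1)
    - 2 * (s - 1) * (s - 2) * chi s * chi (3 * s))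

noncomputable def f2 (s : ℂ) : ℂ :=
  (s - 2) * ((A * s + 3) * (s - 1) ^ 2 * chi (s + 2)
    - 2 * (s - 1) * (s - 3) * chi (s + 1)
    - (s + 2) * (s - 3) * chi s)

noncomputable def Z1 (s : ℂ) : ℂ := chi (2 * s) * f1 s - chi (2 * s - 1) * f1 (1 - s)

noncomputable def Z2 (s : ℂ) : ℂ := chi (2 * s) * f2 s - chi (2 * s - 1) * f2 (1 - s)

/-!
Put `w = 1 - s`, so that `Re w → ∞`. Up to a nonvanishing factor, the functional equation
`χ(1 - s) = χ(s)` turns `f₁(1 - w)` into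
`(1 + o(1)) r(w) r(3w - 1) / w - (-3A + o(1) + O(r(w) / w))`, where `r(w) = χ(w) / χ(w - 1)`.
Euler's product for `Γ(z)² / (Γ(z - 1/2) Γ(z + 1/2))` and `ζ → 1` give `r(w)² / w → 1 / (2π)`
uniformly in `Im w`. Hence `r(w) / w → 0`, while the square of the first term tends to
`3 / (4π²)` and that of the second to `9A² = (π - 3)²`. These limits differ. Comparing squares
avoids choosing a branch of the square root.
-/

open Filter Topology

section ReAtTop

theorem tendsto_mul_add_comap_re_atTop {m : ℝ} (hm : 0 < m) (c : ℂ) :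
    Tendsto (fun w : ℂ => m * w + c) (comap re atTop) (comap re atTop) := by
  refine tendsto_comap_iff.2 ?_
  have hre : re ∘ (fun w : ℂ => m * w + c) = fun w => m * w.re + c.re := by ext w; simp
  rw [hre]
  exact tendsto_atTop_add_const_right _ _ (tendsto_comap.const_mul_atTop hm)

theorem tendsto_sub_comap_re_atTop (c : ℂ) :
    Tendsto (fun w : ℂ => w - c) (comap re atTop) (comap re atTop) := by
  simpa [sub_eq_add_neg] using tendsto_mul_add_comap_re_atTop one_pos (-c)

theorem eventually_lt_re_comap_re_atTop (x : ℝ) : ∀ᶠ w : ℂ in comap re atTop, x < w.re :=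
  tendsto_comap.eventually_gt_atTop x

theorem tendsto_inv_comap_re_atTop : Tendsto (fun w : ℂ => w⁻¹) (comap re atTop) (𝓝 0) := by
  refine tendsto_inv₀_cobounded.comp (tendsto_norm_atTop_iff_cobounded.1 ?_)
  exact tendsto_atTop_mono re_le_norm tendsto_comap

theorem tendsto_linear_div_comap_re_atTop (m c : ℂ) :
    Tendsto (fun w : ℂ => (m * w + c) / w) (comap re atTop) (𝓝 m) := by
  have hlim : Tendsto (fun w : ℂ => m + c * w⁻¹) (comap re atTop) (𝓝 m) := by
    simpa using (tendsto_inv_comap_re_atTop.const_mul c).const_add m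
  refine hlim.congr' ?_
  filter_upwards [eventually_lt_re_comap_re_atTop 0] with w hw
  have := ne_zero_of_re_pos hw
  field_simp

end ReAtTop

section Gamma

theorem GammaSeq_sq_div_eq_prod {z : ℂ} (a : ℂ) (hz : ∀ m : ℕ, z ≠ -m) {n : ℕ} (hn : n ≠ 0) :
    GammaSeq z n ^ 2 / (GammaSeq (z - a) n * GammaSeq (z + a) n) =
      ∏ j ∈ Finset.range (n + 1), (1 + -a ^ 2 * ((z + j) ^ 2)⁻¹) := by
  have hn' : (n : ℂ) ≠ 0 := Nat.cast_ne_zero.2 hn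
  have hfactor (j : ℕ) :
      1 + -a ^ 2 * ((z + j) ^ 2)⁻¹ = (z - a + j) * (z + a + j) / (z + j) ^ 2 := by
    have : z + j ≠ 0 := fun h => hz j (eq_neg_of_add_eq_zero_left h)
    field_simp
    ring
  have hnumerator : ((n : ℂ) ^ z * n.factorial) ^ 2 =
      (n : ℂ) ^ (z - a) * n.factorial * ((n : ℂ) ^ (z + a) * n.factorial) := by
    rw [mul_mul_mul_comm, ← cpow_add _ _ hn', mul_pow, ← cpow_nat_mul]
    ring_nf
  have hnumerator_ne : (n : ℂ) ^ (z - a) * n.factorial * ((n : ℂ) ^ (z + a) * n.factorial) ≠ 0 := by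
    simp [cpow_eq_zero_iff, hn', n.factorial_ne_zero]
  simp only [hfactor, Finset.prod_div_distrib, Finset.prod_mul_distrib, Finset.prod_pow, GammaSeq]
  rw [div_pow, hnumerator, div_mul_div_comm, div_div_div_eq, mul_comm (_ ^ 2),
    mul_div_mul_left _ _ hnumerator_ne]

theorem summable_norm_const_mul_inv_add_nat_sq (b z : ℂ) :
    Summable fun j : ℕ => ‖b * ((z + j) ^ 2)⁻¹‖ := by
  have hsum := (EisensteinSeries.linear_right_summable z 1 le_rfl).comp_injective
    (Nat.cast_injective (R := ℤ))
  refine (Summable.mul_left b ?_).norm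
  simpa [Function.comp_def] using hsum

theorem Gamma_sq_div_eq_tprod {z a : ℂ} (hz : ∀ m : ℕ, z ≠ -m) (hsub : ∀ m : ℕ, z - a ≠ -m)
    (hadd : ∀ m : ℕ, z + a ≠ -m) :
    Gamma z ^ 2 / (Gamma (z - a) * Gamma (z + a)) = ∏' j : ℕ, (1 + -a ^ 2 * ((z + j) ^ 2)⁻¹) := by
  have hGamma : Tendsto (fun n => GammaSeq z n ^ 2 / (GammaSeq (z - a) n * GammaSeq (z + a) n))
      atTop (𝓝 (Gamma z ^ 2 / (Gamma (z - a) * Gamma (z + a)))) :=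
    ((GammaSeq_tendsto_Gamma _).pow 2).div
      ((GammaSeq_tendsto_Gamma _).mul (GammaSeq_tendsto_Gamma _))
      (mul_ne_zero (Gamma_ne_zero hsub) (Gamma_ne_zero hadd))
  have hprod := (multipliable_one_add_of_summable
    (summable_norm_const_mul_inv_add_nat_sq (-a ^ 2) z)).tendsto_prod_tprod_nat
  refine tendsto_nhds_unique hGamma (((tendsto_add_atTop_iff_nat 1).2 hprod).congr' ?_)
  filter_upwards [eventually_ne_atTop 0] with n hn
  exact (GammaSeq_sq_div_eq_prod a hz hn).symm

theorem tendsto_tprod_one_add_const_mul_inv_add_nat_sq_comap_re_atTop (b : ℂ) :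
    Tendsto (fun z : ℂ => ∏' j : ℕ, (1 + b * ((z + j) ^ 2)⁻¹)) (comap re atTop) (𝓝 1) := by
  have hterm (j : ℕ) :
      Tendsto (fun z : ℂ => b * ((z + j) ^ 2)⁻¹) (comap re atTop) (𝓝 0) := by
    have hshift := tendsto_inv_comap_re_atTop.comp (tendsto_sub_comap_re_atTop (-(j : ℂ)))
    simpa [Function.comp_def] using (hshift.pow 2).const_mul b
  have hbound : ∀ᶠ z : ℂ in comap re atTop,
      ∀ j : ℕ, ‖b * ((z + j) ^ 2)⁻¹‖ ≤ ‖b * ((1 + j : ℂ) ^ 2)⁻¹‖ := by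
    filter_upwards [eventually_lt_re_comap_re_atTop 1] with z hz j
    have hnorm : ‖(1 + j : ℂ)‖ ≤ ‖z + j‖ := by
      calc ‖(1 + j : ℂ)‖ = 1 + j := by exact_mod_cast norm_natCast (1 + j)
        _ ≤ (z + j).re := by simpa using hz.le
        _ ≤ ‖z + j‖ := re_le_norm _
    have hpos : 0 < ‖(1 + j : ℂ)‖ := norm_pos_iff.2 (by exact_mod_cast (by omega : 1 + j ≠ 0))
    simp only [norm_mul, norm_inv, norm_pow]
    gcongr
  simpa using tendsto_tprod_one_add_of_dominated_convergence
    (summable_norm_const_mul_inv_add_nat_sq b 1) hterm hbound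

theorem tendsto_Gamma_sq_div_comap_re_atTop (a : ℂ) :
    Tendsto (fun z : ℂ => Gamma z ^ 2 / (Gamma (z - a) * Gamma (z + a)))
      (comap re atTop) (𝓝 1) := by
  have hnat {w : ℂ} (hw : 0 < w.re) (m : ℕ) : w ≠ -m := by
    rintro rfl
    simp only [neg_re, natCast_re] at hw
    linarith [(m.cast_nonneg : (0 : ℝ) ≤ m)]
  refine (tendsto_tprod_one_add_const_mul_inv_add_nat_sq_comap_re_atTop (-a ^ 2)).congr' ?_
  filter_upwards [eventually_lt_re_comap_re_atTop |a.re|] with z hz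
  obtain ⟨hlow, hhigh⟩ := abs_lt.1 hz
  exact (Gamma_sq_div_eq_tprod (hnat ((abs_nonneg _).trans_lt hz))
    (hnat (by simpa using hhigh)) (hnat (by simp only [add_re]; linarith))).symm

theorem Gammaℝ_div_Gammaℝ_sub_one_sq (w : ℂ) :
    (Gammaℝ w / Gammaℝ (w - 1)) ^ 2 = (Gamma (w / 2) / Gamma ((w - 1) / 2)) ^ 2 / Real.pi := by
  have hpi : (Real.pi : ℂ) ≠ 0 := by exact_mod_cast Real.pi_ne_zero
  have hpow : ((Real.pi : ℂ) ^ (-(w - 1) / 2)) ^ 2 = Real.pi * ((Real.pi : ℂ) ^ (-w / 2)) ^ 2 := by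
    have hexponent : ((2 : ℕ) : ℂ) * (-(w - 1) / 2) = 1 + (2 : ℕ) * (-w / 2) := by
      push_cast
      ring
    rw [← cpow_nat_mul, ← cpow_nat_mul, hexponent, cpow_add _ _ hpi, cpow_one]
  have hpow_ne : ((Real.pi : ℂ) ^ (-w / 2)) ^ 2 ≠ 0 := by simp [cpow_eq_zero_iff, hpi]
  rw [Gammaℝ_def, Gammaℝ_def, div_pow, mul_pow, mul_pow, hpow, mul_comm (Real.pi : ℂ),
    mul_assoc, mul_div_mul_left _ _ hpow_ne, mul_comm (Real.pi : ℂ), ← div_div, div_pow]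

theorem tendsto_Gammaℝ_div_Gammaℝ_sub_one_sq_div_comap_re_atTop :
    Tendsto (fun w : ℂ => (Gammaℝ w / Gammaℝ (w - 1)) ^ 2 / w) (comap re atTop)
      (𝓝 (1 / (2 * Real.pi))) := by
  have hhalf : Tendsto (fun w : ℂ => w / 2) (comap re atTop) (comap re atTop) := by
    simpa [div_eq_inv_mul] using tendsto_mul_add_comap_re_atTop (inv_pos.2 two_pos) 0
  have hlim := ((tendsto_Gamma_sq_div_comap_re_atTop (1 / 2)).comp hhalf).mul
    ((tendsto_linear_div_comap_re_atTop 1 (-1)).mul_const (1 / (2 * Real.pi) : ℂ))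
  simp only [one_mul] at hlim
  refine hlim.congr' ?_
  filter_upwards [eventually_lt_re_comap_re_atTop 1] with w hw
  have hw0 : w ≠ 0 := ne_zero_of_re_pos (one_pos.trans hw)
  have hw1 : w - 1 ≠ 0 := ne_zero_of_re_pos (by simpa using hw)
  have hpi : (Real.pi : ℂ) ≠ 0 := by exact_mod_cast Real.pi_ne_zero
  have hGamma : Gamma ((w - 1) / 2) ≠ 0 := Gamma_ne_zero_of_re_pos (by simpa using hw)
  have hstep : Gamma (w / 2 + 1 / 2) = (w - 1) / 2 * Gamma ((w - 1) / 2) := by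
    rw [← Gamma_add_one _ (div_ne_zero hw1 two_ne_zero)]
    ring_nf
  rw [Gammaℝ_div_Gammaℝ_sub_one_sq, Function.comp_apply, hstep, ← sub_div, ← sub_eq_add_neg]
  field_simp

end Gamma

section Zeta

theorem tendsto_riemannZeta_comap_re_atTop : Tendsto riemannZeta (comap re atTop) (𝓝 1) := by
  have hnorm (n : ℕ) (s : ℂ) :
      ‖1 / ((n : ℂ) + 1) ^ s‖ = 1 / ((n : ℝ) + 1) ^ s.re := by
    rw [norm_div, norm_one, ← Nat.cast_add_one, norm_natCast_cpow_of_pos n.succ_pos,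
      Nat.cast_add_one]
  have hterm (n : ℕ) : Tendsto (fun s : ℂ => 1 / ((n : ℂ) + 1) ^ s) (comap re atTop)
      (𝓝 (if n = 0 then 1 else 0)) := by
    split_ifs with hn
    · simpa [hn] using tendsto_const_nhds
    · have hbase : 1 < (n : ℝ) + 1 := by simpa using Nat.pos_of_ne_zero hn
      refine tendsto_zero_iff_norm_tendsto_zero.2 ?_
      simp only [hnorm]
      simpa only [one_div] using!
        ((tendsto_rpow_atTop_of_base_gt_one _ hbase).comp tendsto_comap).inv_tendsto_atTop
  have hsummable : Summable fun n : ℕ => 1 / ((n : ℝ) + 1) ^ (2 : ℝ) := by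
    exact_mod_cast (summable_nat_add_iff 1).2 (Real.summable_one_div_nat_rpow.2 one_lt_two)
  have hbound : ∀ᶠ s : ℂ in comap re atTop,
      ∀ n : ℕ, ‖1 / ((n : ℂ) + 1) ^ s‖ ≤ 1 / ((n : ℝ) + 1) ^ (2 : ℝ) := by
    filter_upwards [eventually_lt_re_comap_re_atTop 2] with s hs n
    rw [hnorm]
    gcongr
    simp
  have hlim := tendsto_tsum_of_dominated_convergence hsummable hterm hbound
  rw [tsum_ite_eq] at hlim
  refine hlim.congr' ?_
  filter_upwards [eventually_lt_re_comap_re_atTop 1] with s hs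
  exact (zeta_eq_tsum_one_div_nat_add_one_cpow hs).symm

end Zeta

section Chi

theorem chi_one_sub (s : ℂ) : chi (1 - s) = chi s := by
  rw [chi, chi, completedRiemannZeta₀_one_sub]
  ring

theorem chi_eq_mul_Gammaℝ_mul_riemannZeta {s : ℂ} (hs : 0 < s.re) (hs1 : s ≠ 1) :
    chi s = s * (s - 1) * (Gammaℝ s * riemannZeta s) := by
  have hs0 : s ≠ 0 := ne_zero_of_re_pos hs
  have hsub : 1 - s ≠ 0 := sub_ne_zero.2 hs1.symm
  rw [riemannZeta_def_of_ne_zero hs0, mul_div_cancel₀ _ (Gammaℝ_ne_zero_of_re_pos hs),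
    completedRiemannZeta_eq, chi]
  field_simp
  ring

theorem chi_ne_zero_of_one_le_re {s : ℂ} (hs : 1 ≤ s.re) : chi s ≠ 0 := by
  have hpos : 0 < s.re := one_pos.trans_le hs
  rcases eq_or_ne s 1 with rfl | hs1
  · simp [chi]
  rw [chi_eq_mul_Gammaℝ_mul_riemannZeta hpos hs1]
  exact mul_ne_zero (mul_ne_zero (ne_zero_of_re_pos hpos) (sub_ne_zero.2 hs1))
    (mul_ne_zero (Gammaℝ_ne_zero_of_re_pos hpos) (riemannZeta_ne_zero_of_one_le_re hs))

/-- The ratio `χ(w) / χ(w - 1)` of consecutive values of `χ`, whose square is asymptotic to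
`w / (2π)` as `Re w → ∞`. Its junk value `0` at zeros of `χ(w - 1)` only occurs for `Re w < 2`. -/
noncomputable def chiRatio (w : ℂ) : ℂ := chi w / chi (w - 1)

theorem chiRatio_mul_chi_sub_one {w : ℂ} (hchi : chi (w - 1) ≠ 0) :
    chiRatio w * chi (w - 1) = chi w :=
  div_mul_cancel₀ _ hchi

theorem chiRatio_eq_Gammaℝ_mul_riemannZeta {w : ℂ} (hw : 2 < w.re) :
    chiRatio w = (Gammaℝ w / Gammaℝ (w - 1)) * (riemannZeta w / riemannZeta (w - 1)) /
      ((w - 2) / w) := by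
  have hw0 : w ≠ 0 := ne_zero_of_re_pos (by linarith)
  have hw1 : w - 1 ≠ 0 := ne_zero_of_re_pos (by simp only [sub_re, one_re]; linarith)
  have hw2 : w - 2 ≠ 0 := ne_zero_of_re_pos (by simpa using hw)
  have hw1' : w - 1 ≠ 1 := fun h => hw2 (by linear_combination h)
  rw [chiRatio, chi_eq_mul_Gammaℝ_mul_riemannZeta (by linarith) (sub_ne_zero.1 hw1),
    chi_eq_mul_Gammaℝ_mul_riemannZeta (by simp only [sub_re, one_re]; linarith) hw1',
    show w - 1 - 1 = w - 2 by ring]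
  field_simp

theorem tendsto_chiRatio_sq_div_comap_re_atTop :
    Tendsto (fun w : ℂ => chiRatio w ^ 2 / w) (comap re atTop) (𝓝 (1 / (2 * Real.pi))) := by
  have hzeta : Tendsto (fun w : ℂ => riemannZeta w / riemannZeta (w - 1)) (comap re atTop)
      (𝓝 1) := by
    simpa [Pi.div_def] using tendsto_riemannZeta_comap_re_atTop.div
      (tendsto_riemannZeta_comap_re_atTop.comp (tendsto_sub_comap_re_atTop 1)) one_ne_zero
  have hlim := (tendsto_Gammaℝ_div_Gammaℝ_sub_one_sq_div_comap_re_atTop.mul (hzeta.pow 2)).div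
    ((tendsto_linear_div_comap_re_atTop 1 (-2)).pow 2) (pow_ne_zero 2 one_ne_zero)
  simp only [one_pow, mul_one, div_one] at hlim
  refine hlim.congr' ?_
  filter_upwards [eventually_lt_re_comap_re_atTop 2] with w hw
  simp only [chiRatio_eq_Gammaℝ_mul_riemannZeta hw, Pi.div_apply, one_mul, ← sub_eq_add_neg]
  rw [div_mul_eq_mul_div, ← mul_pow, div_right_comm, ← div_pow]

theorem tendsto_chiRatio_div_comap_re_atTop :
    Tendsto (fun w : ℂ => chiRatio w / w) (comap re atTop) (𝓝 0) := by
  have hsq : Tendsto (fun w : ℂ => (chiRatio w / w) ^ 2) (comap re atTop) (𝓝 0) := by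
    have hlim := tendsto_chiRatio_sq_div_comap_re_atTop.mul tendsto_inv_comap_re_atTop
    rw [mul_zero] at hlim
    exact hlim.congr fun w => by ring
  refine tendsto_zero_iff_norm_tendsto_zero.2 ?_
  simpa [Real.sqrt_sq, norm_nonneg, div_nonneg] using hsq.norm.sqrt

theorem tendsto_chiRatio_mul_chiRatio_div_sq_comap_re_atTop :
    Tendsto (fun w : ℂ => (chiRatio w * chiRatio (3 * w - 1) / w) ^ 2) (comap re atTop)
      (𝓝 (3 / (4 * Real.pi ^ 2))) := by
  have htriple : Tendsto (fun w : ℂ => 3 * w - 1) (comap re atTop) (comap re atTop) := by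
    simpa [sub_eq_add_neg] using tendsto_mul_add_comap_re_atTop three_pos (-1)
  have hlim := (tendsto_chiRatio_sq_div_comap_re_atTop.mul
    (tendsto_chiRatio_sq_div_comap_re_atTop.comp htriple)).mul
    (tendsto_linear_div_comap_re_atTop 3 (-1))
  have hconst : (1 / (2 * Real.pi) * (1 / (2 * Real.pi)) * 3 : ℂ) = 3 / (4 * Real.pi ^ 2) := by
    ring
  rw [hconst] at hlim
  refine hlim.congr' ?_
  filter_upwards [htriple.eventually (eventually_lt_re_comap_re_atTop 0)] with w hw
  have hw3 : 3 * w - 1 ≠ 0 := ne_zero_of_re_pos hw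
  rw [Function.comp_apply, ← sub_eq_add_neg, mul_assoc, div_mul_div_cancel₀ hw3]
  ring

end Chi

theorem f1_one_sub {w : ℂ} (hw : w ≠ 0) (hchi : chi (w - 1) ≠ 0)
    (hchi' : chi (3 * w - 1 - 1) ≠ 0) :
    f1 (1 - w) = w ^ 4 * chi (w - 1) * chi (3 * w - 1 - 1) *
      ((1 - 2 * w⁻¹) * (1 + w⁻¹) * (chiRatio w * chiRatio (3 * w - 1) / w) -
        ((3 - w⁻¹) * (w⁻¹ - A) - 2 * (1 + w⁻¹) * (chiRatio w / w))) := by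
  have hchi_add_one : chi (1 - w + 1) = chi (w - 1) := by
    rw [← chi_one_sub]
    ring_nf
  have hchi_three_mul : chi (3 * (1 - w)) = chi (3 * w - 1 - 1) := by
    rw [← chi_one_sub]
    ring_nf
  have hchi_three_mul_sub_one : chi (3 * (1 - w) - 1) = chi (3 * w - 1) := by
    rw [← chi_one_sub]
    ring_nf
  rw [f1, hchi_add_one, hchi_three_mul, hchi_three_mul_sub_one, chi_one_sub,
    ← chiRatio_mul_chi_sub_one hchi, ← chiRatio_mul_chi_sub_one hchi']
  field_simp
  ring

theorem three_div_four_pi_sq_ne_three_mul_A_sq : (3 / (4 * Real.pi ^ 2) : ℂ) ≠ (3 * -A) ^ 2 := by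
  have hreal : (Real.pi - 3) ^ 2 < 3 / (4 * Real.pi ^ 2) := by
    have hlow := Real.pi_gt_three
    have hhigh := Real.pi_lt_d2
    calc (Real.pi - 3) ^ 2 < 0.15 ^ 2 := by gcongr; linarith
      _ < 3 / (4 * 3.15 ^ 2) := by norm_num
      _ < 3 / (4 * Real.pi ^ 2) := by gcongr
  have hA : (3 * -A) ^ 2 = (((Real.pi - 3) ^ 2 : ℝ) : ℂ) := by
    rw [A]
    push_cast
    ring
  rw [hA]
  exact_mod_cast hreal.ne'

theorem eventually_f1_one_sub_ne_zero_comap_re_atTop :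
    ∀ᶠ w : ℂ in comap re atTop, f1 (1 - w) ≠ 0 := by
  have hinv := tendsto_inv_comap_re_atTop
  have hremainder : Tendsto (fun w : ℂ => (3 - w⁻¹) * (w⁻¹ - A) - 2 * (1 + w⁻¹) * (chiRatio w / w))
      (comap re atTop) (𝓝 (3 * -A)) := by
    simpa using ((hinv.const_sub 3).mul (hinv.sub_const A)).sub
      (((hinv.const_add 1).const_mul 2).mul tendsto_chiRatio_div_comap_re_atTop)
  have hproduct : Tendsto (fun w : ℂ =>
      ((1 - 2 * w⁻¹) * (1 + w⁻¹) * (chiRatio w * chiRatio (3 * w - 1) / w)) ^ 2)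
      (comap re atTop) (𝓝 (3 / (4 * Real.pi ^ 2) : ℂ)) := by
    have hcoeff := (((hinv.const_mul 2).const_sub 1).mul (hinv.const_add 1)).pow 2
    simpa [mul_pow] using hcoeff.mul tendsto_chiRatio_mul_chiRatio_div_sq_comap_re_atTop
  filter_upwards [(hproduct.sub (hremainder.pow 2)).eventually_ne
      (sub_ne_zero.2 three_div_four_pi_sq_ne_three_mul_A_sq),
    eventually_lt_re_comap_re_atTop 2] with w hsq_ne hw
  have hw0 : w ≠ 0 := ne_zero_of_re_pos (two_pos.trans hw)
  have hchi : chi (w - 1) ≠ 0 :=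
    chi_ne_zero_of_one_le_re (by simp only [sub_re, one_re]; linarith)
  have hchi' : chi (3 * w - 1 - 1) ≠ 0 := chi_ne_zero_of_one_le_re (by
    simp only [sub_re, mul_re, re_ofNat, im_ofNat, one_re]
    linarith)
  rw [f1_one_sub hw0 hchi hchi']
  exact mul_ne_zero (mul_ne_zero (mul_ne_zero (pow_ne_zero 4 hw0) hchi) hchi')
    (sub_ne_zero.2 fun heq => hsq_ne (by rw [heq, sub_self]))

theorem f1_no_zero_left :
    ∃ σ₁ : ℝ, ∀ s : ℂ, s.re < σ₁ → f1 s ≠ 0 := by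
  obtain ⟨x, hx⟩ := eventually_atTop.1
    (eventually_comap.1 eventually_f1_one_sub_ne_zero_comap_re_atTop)
  refine ⟨1 - x, fun s hs => ?_⟩
  simpa using hx (1 - s).re (by simp only [sub_re, one_re]; linarith) (1 - s) rfl
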